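/- (Intermediate bound in the proof of Lemma 6 of the paper.) Fix reals μ_min and μ* with 0 < μ_min ≤ μ* ≤ 1, and integers T ≥ 1 and 0 ≤ n ≤ T. Let μ : ℤ → ℝ satisfy μ_min ≤ μ(s) ≤ 1 for s ≤ 0, μ(s) = μ_min for 1 ≤ s ≤ n, and μ(s) = μ* for n+1 ≤ s ≤ T. Then ∑_{t=1}^{T} A_μ(t) ≤ n/μ_min + (T−n)/μ* + (1−μ*)/(μ* μ_min). -/

import Mathlib

/-- The expected Age-of-Information at time-slot `t` under a per-slot
success-probability function `μ : ℤ → ℝ`: the series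
`A_μ(t) = ∑_{τ=0}^∞ ∏_{i=0}^{τ-1} (1 − μ(t−i))`, where the `τ = 0` term
(the empty product) equals 1. -/
noncomputable def aoi (μ : ℤ → ℝ) (t : ℤ) : ℝ :=
  ∑' τ : ℕ, ∏ i ∈ Finset.range τ, (1 - μ (t - (i : ℤ)))


lemma aoi_aux_le (m : ℝ) (hm : 0 < m) (μ : ℤ → ℝ) (t : ℤ)
    (h : ∀ s : ℤ, s ≤ t → m ≤ μ s ∧ μ s ≤ 1) (τ : ℕ) :
    0 ≤ ∏ i ∈ Finset.range τ, (1 - μ (t - (i : ℤ))) ∧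
    ∏ i ∈ Finset.range τ, (1 - μ (t - (i : ℤ))) ≤ (1 - m) ^ τ := by
  constructor
  · refine Finset.prod_nonneg fun i _ => ?_
    have := h (t - i) (by omega)
    linarith
  · calc ∏ i ∈ Finset.range τ, (1 - μ (t - (i : ℤ))) ≤ ∏ i ∈ Finset.range τ, (1 - m) := by
          refine Finset.prod_le_prod (fun i _ => ?_) (fun i _ => ?_)
          · have := h (t - i) (by omega)
            linarith
          · have := h (t - i) (by omega)
            linarith
      _ = (1 - m) ^ τ := by simp

lemma aoi_summable (m : ℝ) (hm : 0 < m) (μ : ℤ → ℝ) (t : ℤ)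
    (h : ∀ s : ℤ, s ≤ t → m ≤ μ s ∧ μ s ≤ 1) :
    Summable fun τ : ℕ => ∏ i ∈ Finset.range τ, (1 - μ (t - (i : ℤ))) := by
  have h1 := h t le_rfl
  exact Summable.of_nonneg_of_le (fun τ => (aoi_aux_le m hm μ t h τ).1)
    (fun τ => (aoi_aux_le m hm μ t h τ).2)
    (summable_geometric_of_lt_one (by linarith) (by linarith))

lemma aoi_le (m : ℝ) (hm : 0 < m) (μ : ℤ → ℝ) (t : ℤ)
    (h : ∀ s : ℤ, s ≤ t → m ≤ μ s ∧ μ s ≤ 1) : aoi μ t ≤ 1 / m := by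
  have h1 := h t le_rfl
  have h2 := (aoi_summable m hm μ t h).tsum_le_tsum
    (fun τ => (aoi_aux_le m hm μ t h τ).2)
    (summable_geometric_of_lt_one (by linarith) (by linarith))
  rw [tsum_geometric_of_lt_one (by linarith) (by linarith)] at h2
  simpa [aoi] using h2

lemma aoi_nonneg (m : ℝ) (hm : 0 < m) (μ : ℤ → ℝ) (t : ℤ)
    (h : ∀ s : ℤ, s ≤ t → m ≤ μ s ∧ μ s ≤ 1) : 0 ≤ aoi μ t :=
  tsum_nonneg fun τ => (aoi_aux_le m hm μ t h τ).1

lemma aoi_rec (m : ℝ) (hm : 0 < m) (μ : ℤ → ℝ) (t : ℤ)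
    (h : ∀ s : ℤ, s ≤ t + 1 → m ≤ μ s ∧ μ s ≤ 1) :
    aoi μ (t + 1) = 1 + (1 - μ (t + 1)) * aoi μ t := by
  unfold aoi
  rw [(aoi_summable m hm μ (t + 1) h).tsum_eq_zero_add, ← tsum_mul_left]
  congr 1
  refine tsum_congr fun τ => ?_
  rw [Finset.prod_range_succ', mul_comm]
  congr 1
  · simp
  · refine Finset.prod_congr rfl fun i _ => ?_
    congr 2
    push_cast
    ring

lemma sum_Icc_int_succ (f : ℤ → ℝ) (k : ℕ) :
    ∑ t ∈ Finset.Icc (1 : ℤ) ((k + 1 : ℕ) : ℤ), f t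
      = ∑ t ∈ Finset.Icc (1 : ℤ) (k : ℤ), f t + f (k + 1) := by
  have : Finset.Icc (1 : ℤ) ((k + 1 : ℕ) : ℤ) = insert ((k : ℤ) + 1) (Finset.Icc (1 : ℤ) (k : ℤ)) := by
    ext x
    simp only [Finset.mem_Icc, Finset.mem_insert]
    omega
  rw [this, Finset.sum_insert (by simp), add_comm]

/-- (Intermediate bound in the proof of Lemma 6.) Fix `0 < μ_min ≤ μ* ≤ 1`
and integers `T ≥ 1`, `0 ≤ n ≤ T`. Let `μ : ℤ → ℝ` satisfy
`μ_min ≤ μ(s) ≤ 1` for `s ≤ 0`, `μ(s) = μ_min` for `1 ≤ s ≤ n`, and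
`μ(s) = μ*` for `n+1 ≤ s ≤ T`. Then
`∑_{t=1}^{T} A_μ(t) ≤ n/μ_min + (T−n)/μ* + (1−μ*)/(μ* μ_min)`. -/
theorem stmt_10 (μmin μstar : ℝ) (hμmin_pos : 0 < μmin) (hμ_le : μmin ≤ μstar)
    (hμstar_le : μstar ≤ 1) (T n : ℕ) (hT : 1 ≤ T) (hn : n ≤ T)
    (μ : ℤ → ℝ)
    (h0 : ∀ s : ℤ, s ≤ 0 → μmin ≤ μ s ∧ μ s ≤ 1)
    (hworst : ∀ s : ℤ, 1 ≤ s → s ≤ (n : ℤ) → μ s = μmin)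
    (hopt : ∀ s : ℤ, (n : ℤ) + 1 ≤ s → s ≤ (T : ℤ) → μ s = μstar) :
    ∑ t ∈ Finset.Icc (1 : ℤ) (T : ℤ), aoi μ t ≤
      (n : ℝ) / μmin + ((T : ℝ) - n) / μstar + (1 - μstar) / (μstar * μmin) := by
  have hs : 0 < μstar := lt_of_lt_of_le hμmin_pos hμ_le
  have hall : ∀ s : ℤ, s ≤ (T : ℤ) → μmin ≤ μ s ∧ μ s ≤ 1 := by
    intro s hsT
    rcases le_or_gt s 0 with h | h
    · exact h0 s h
    rcases le_or_gt s (n : ℤ) with h' | h'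
    · rw [hworst s (by omega) h']
      exact ⟨le_rfl, by linarith⟩
    · rw [hopt s (by omega) hsT]
      exact ⟨hμ_le, hμstar_le⟩
  have hle : ∀ t : ℤ, t ≤ (T : ℤ) → aoi μ t ≤ 1 / μmin := fun t ht =>
    aoi_le μmin hμmin_pos μ t fun s hst => hall s (by omega)
  have hA : ∀ k : ℕ, k ≤ n →
      ∑ t ∈ Finset.Icc (1 : ℤ) (k : ℤ), aoi μ t ≤ (k : ℝ) / μmin := by
    intro k
    induction k with
    | zero => intro _; simp
    | succ k ih =>
      intro hk
      rw [sum_Icc_int_succ]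
      have h1 := ih (by omega)
      have h2 := hle ((k : ℤ) + 1) (by omega)
      push_cast
      rw [add_div]
      linarith
  have hc : 0 ≤ (1 - μstar) / μstar := div_nonneg (by linarith) hs.le
  have hB : ∀ j : ℕ, n + j ≤ T →
      ∑ t ∈ Finset.Icc (1 : ℤ) ((n + j : ℕ) : ℤ), aoi μ t
        + (1 - μstar) / μstar * aoi μ ((n + j : ℕ) : ℤ) ≤
      (n : ℝ) / μmin + (j : ℝ) / μstar + (1 - μstar) / μstar * (1 / μmin) := by
    intro j
    induction j with
    | zero =>
      intro _
      have h1 := hA n le_rfl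
      have h2 := mul_le_mul_of_nonneg_left (hle (n : ℤ) (by omega)) hc
      simp only [add_zero, Nat.cast_zero, zero_div]
      linarith
    | succ j ih =>
      intro hj
      have h1 := ih (by omega)
      rw [← add_assoc, sum_Icc_int_succ]
      have hr := aoi_rec μmin hμmin_pos μ ((n + j : ℕ) : ℤ)
        fun s hst => hall s (by omega)
      rw [hopt (((n + j : ℕ) : ℤ) + 1) (by omega) (by omega)] at hr
      have e : (((n + j + 1 : ℕ)) : ℤ) = ((n + j : ℕ) : ℤ) + 1 := by omega
      rw [e, hr]
      have e2 : (1 + (1 - μstar) * aoi μ ((n + j : ℕ) : ℤ))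
          + (1 - μstar) / μstar * (1 + (1 - μstar) * aoi μ ((n + j : ℕ) : ℤ))
          = 1 / μstar + (1 - μstar) / μstar * aoi μ ((n + j : ℕ) : ℤ) := by
        field_simp
        ring
      have e3 : ((j + 1 : ℕ) : ℝ) / μstar = (j : ℝ) / μstar + 1 / μstar := by
        push_cast
        rw [add_div]
      rw [e3]
      linarith
  obtain ⟨j, rfl⟩ := Nat.exists_eq_add_of_le hn
  have h1 := hB j le_rfl
  have h2 := mul_nonneg hc (aoi_nonneg μmin hμmin_pos μ ((n + j : ℕ) : ℤ) hall)
  have e4 : (((n + j : ℕ) : ℝ) - n) = j := by push_cast; ring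
  have e5 : (1 - μstar) / (μstar * μmin) = (1 - μstar) / μstar * (1 / μmin) := by
    field_simp
  rw [e4, e5]
  linarith
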